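/- arXiv:2506.23965 — 10 statements merged into one kernel-verified Lean document; each statement's English description precedes it below -/
import Mathlib

section
/- For every integer n ≥ 1, the path graph on n vertices satisfies the neighbour sum property if and only if n ≡ 2 (mod 3). -/
/-!
Shift the vertex labels by one and pad `f` with zeros, writing `g (i + 1) = f v_i` and
`g 0 = g (n + 1) = 0`. The neighbour sum property then becomes the linear recurrence
`g (k + 2) = g (k + 1) - g k` for `k < n` (`finsum_neighborSet_pathGraph'`). Its solutions with
`g 0 = 0` are the multiples of the sequence `0, 1, 1, 0, -1, -1, …` (`sixCycle`), which vanishes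
exactly at the multiples of `3`. Hence a nonzero solution satisfying `g (n + 1) = 0` exists iff
`3 ∣ n + 1`.
-/

/-- A locally finite simple graph satisfies the *neighbour sum property* if there is a
function `f : V → ℝ`, not identically zero, mapping every vertex to the sum of the
values taken by its neighbours. -/
def SimpleGraph.HasNSP {V : Type*} (G : SimpleGraph V) : Prop :=
  ∃ f : V → ℝ, f ≠ 0 ∧ ∀ x : V, f x = ∑ᶠ y ∈ G.neighborSet x, f y

/-- The path graph on `n` vertices `v_0, …, v_{n-1}`, where `v_i` is adjacent to
`v_{i+1}` and there are no other adjacencies. -/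
def pathGraph' (n : ℕ) : SimpleGraph (Fin n) :=
  SimpleGraph.fromRel (fun i j => (i : ℕ) + 1 = (j : ℕ))

/-- The fundamental solution `0, 1, 1, 0, -1, -1, …` of `s (k + 2) = s (k + 1) - s k`. -/
def sixCycle : ℕ → ℝ
  | 0 => 0
  | 1 => 1
  | k + 2 => sixCycle (k + 1) - sixCycle k

lemma sixCycle_eq_zero_iff : ∀ k : ℕ, sixCycle k = 0 ↔ k % 3 = 0
  | 0 => by simp [sixCycle]
  | 1 => by simp [sixCycle]
  | 2 => by simp [sixCycle]
  | k + 3 => by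
    have h : sixCycle (k + 3) = -sixCycle k := by
      simp only [sixCycle]
      ring
    rw [h, neg_eq_zero, sixCycle_eq_zero_iff k]
    omega

/-- The zero boundary values `g 0` and `g (n + 1)` stand in for the missing neighbours of the
two end vertices, so that every vertex is treated uniformly. -/
lemma finsum_neighborSet_pathGraph' {n : ℕ} (g : ℕ → ℝ) (h0 : g 0 = 0) (hn : g (n + 1) = 0)
    (x : Fin n) :
    ∑ᶠ y ∈ (pathGraph' n).neighborSet x, g (y + 1) = g x + g (x + 2) := by
  classical
  have hadj (y : Fin n) : y ∈ (pathGraph' n).neighborSet x ↔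
      ((y : ℕ) + 1 = x ∨ (y : ℕ) = x + 1) := by
    simp only [pathGraph', SimpleGraph.mem_neighborSet, SimpleGraph.fromRel_adj, ne_eq,
      Fin.ext_iff]
    omega
  have hsplit (y : Fin n) : (∑ᶠ _ : y ∈ (pathGraph' n).neighborSet x, g (y + 1)) =
      (if (y : ℕ) + 1 = x then g x else 0) + (if (y : ℕ) = x + 1 then g (x + 2) else 0) := by
    rw [finsum_eq_if, if_congr (hadj y) rfl rfl]
    grind
  have hx := x.isLt
  simp only [hsplit]
  rw [finsum_eq_sum_of_fintype, Finset.sum_add_distrib,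
    Fin.sum_univ_eq_sum_range (fun y => if y + 1 = (x : ℕ) then g x else 0),
    Fin.sum_univ_eq_sum_range (fun y => if y = (x : ℕ) + 1 then g (x + 2) else 0)]
  congr 1
  · rcases hx0 : (x : ℕ) with _ | k
    · simp [h0]
    · simp only [Nat.add_right_cancel_iff, Finset.sum_ite_eq', Finset.mem_range]
      rw [if_pos (by omega)]
  · rw [Finset.sum_ite_eq']
    split_ifs with h
    · rfl
    · rw [Finset.mem_range] at h
      rw [show (x : ℕ) + 2 = n + 1 by omega, hn]

/-- For every `n ≥ 1`, the path graph on `n` vertices satisfies the neighbour sum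
property if and only if `n ≡ 2 (mod 3)`. -/
theorem pathGraph_hasNSP_iff (n : ℕ) (hn : 1 ≤ n) :
    (pathGraph' n).HasNSP ↔ n % 3 = 2 := by
  constructor
  · rintro ⟨f, hf, hsum⟩
    let g : ℕ → ℝ := fun k => if h : 0 < k ∧ k - 1 < n then f ⟨k - 1, h.2⟩ else 0
    have hg0 : g 0 = 0 := by simp [g]
    have hgn : g (n + 1) = 0 := by simp [g]
    have hgf (y : Fin n) : g (y + 1) = f y := by simp [g]
    have hrec (k : ℕ) (hk : k < n) : g (k + 1) = g k + g (k + 2) := by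
      have h := finsum_neighborSet_pathGraph' g hg0 hgn ⟨k, hk⟩
      simp only [hgf] at h
      rw [← hsum] at h
      rw [← h]
      exact hgf ⟨k, hk⟩
    have hmul (k : ℕ) : k ≤ n → g k = g 1 * sixCycle k ∧
        g (k + 1) = g 1 * sixCycle (k + 1) := by
      induction k with
      | zero => simp [hg0, sixCycle]
      | succ k ih =>
        intro hk
        obtain ⟨h1, h2⟩ := ih (by omega)
        refine ⟨h2, ?_⟩
        have h3 : sixCycle (k + 1 + 1) = sixCycle (k + 1) - sixCycle k := rfl
        rw [h3]
        linarith [hrec k (by omega)]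
    have hend := (hmul n le_rfl).2
    rw [hgn, zero_eq_mul, sixCycle_eq_zero_iff] at hend
    rcases hend with h1 | h3
    · refine absurd (funext fun y => ?_) hf
      rw [← hgf y, (hmul y y.isLt.le).2, h1, zero_mul, Pi.zero_apply]
    · omega
  · intro hmod
    refine ⟨fun y => sixCycle (y + 1), fun h => ?_, fun x => ?_⟩
    · simpa [sixCycle] using congrFun h ⟨0, hn⟩
    · rw [finsum_neighborSet_pathGraph' sixCycle rfl
        ((sixCycle_eq_zero_iff _).2 (by omega))]
      simp [sixCycle]
end

section
/- Let d ≥ 1 and k ≥ 1 be integers and let T be a finite tree possessing a vertex v_0 such that: the degree of v_0 is d, every vertex other than v_0 has degree d+1 or degree 1, and every vertex of degree 1 other than v_0 lies at graph distance exactly k from v_0 (a level-symmetric tree L_{d,k}). Then T satisfies the neighbour sum property if and only if d = 1 and k ≡ 1 (mod 3). -/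
namespace LevelTree

/-- The sequence `a 0 = a 1 = 1`, `a (n + 2) = a (n + 1) - d * a n`. Up to scaling, `a h` is the
value at height `h` above the leaves of a solution that is constant on levels. -/
def seq (d : ℕ) : ℕ → ℤ
  | 0 => 1
  | 1 => 1
  | n + 2 => seq d (n + 1) - d * seq d n

lemma dvd_seq_sub_one (d n : ℕ) : (d : ℤ) ∣ seq d n - 1 ∧ (d : ℤ) ∣ seq d (n + 1) - 1 := by
  induction n with
  | zero => simp [seq]
  | succ n ih =>
    refine ⟨ih.2, ?_⟩
    have h : seq d (n + 1 + 1) - 1 = (seq d (n + 1) - 1) - d * seq d n := by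
      simp only [seq]; ring
    rw [h]
    exact dvd_sub ih.2 (dvd_mul_right _ _)

lemma seq_ne_zero {d : ℕ} (hd : 2 ≤ d) (n : ℕ) : seq d n ≠ 0 := by
  intro h
  have h1 := (dvd_seq_sub_one d n).1
  rw [h, zero_sub, dvd_neg] at h1
  have := Int.le_of_dvd one_pos h1
  omega

lemma seq_one_add_three (n : ℕ) : seq 1 (n + 3) = -seq 1 n := by
  simp only [seq]; push_cast; ring

lemma seq_one_eq_zero_iff (n : ℕ) : seq 1 n = 0 ↔ n % 3 = 2 := by
  induction n using Nat.strong_induction_on with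
  | _ n ih =>
    match n with
    | 0 => simp [seq]
    | 1 => simp [seq]
    | 2 => simp [seq]
    | n + 3 =>
      rw [seq_one_add_three, neg_eq_zero, ih n (by omega)]
      omega

variable {V : Type*} {G : SimpleGraph V}

/-- The children of `v` in the tree rooted at `r`: its neighbours farther from `r`. -/
def children (G : SimpleGraph V) (r v : V) : Set V :=
  {y | G.Adj v y ∧ G.dist r y = G.dist r v + 1}

lemma exists_parent (hT : G.IsTree) {r v : V} (hv : v ≠ r) :
    ∃ p, G.Adj v p ∧ G.dist r v = G.dist r p + 1 := by
  obtain ⟨w, hw⟩ := hT.connected.exists_walk_length_eq_dist r v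
  have hnil : ¬ w.Nil := fun h => hv h.eq.symm
  refine ⟨w.penultimate, (w.adj_penultimate hnil).symm, ?_⟩
  have h1 : G.dist r w.penultimate ≤ w.dropLast.length := SimpleGraph.dist_le _
  have h2 : w.dropLast.length + 1 = w.length := by
    have := SimpleGraph.Walk.not_nil_iff_lt_length.1 hnil
    simp only [SimpleGraph.Walk.length_dropLast]
    omega
  rcases hT.dist_eq_dist_add_one_of_adj r (w.adj_penultimate hnil) with h | h <;> omega

/-- Two parents of `v` would extend to two distinct shortest paths from `r` to `v`. -/
lemma parent_unique (hT : G.IsTree) {r v p q : V} (hp : G.Adj v p) (hq : G.Adj v q)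
    (hpd : G.dist r v = G.dist r p + 1) (hqd : G.dist r v = G.dist r q + 1) : p = q := by
  obtain ⟨w, hw⟩ := hT.connected.exists_walk_length_eq_dist r p
  obtain ⟨u, hu⟩ := hT.connected.exists_walk_length_eq_dist r q
  have h1 : (w.concat hp.symm).IsPath :=
    SimpleGraph.Walk.isPath_of_length_eq_dist _ (by simp [hw, hpd])
  have h2 : (u.concat hq.symm).IsPath :=
    SimpleGraph.Walk.isPath_of_length_eq_dist _ (by simp [hu, hqd])
  have h3 := (hT.existsUnique_path r v).unique h1 h2
  simpa using congrArg SimpleGraph.Walk.penultimate h3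

lemma neighborSet_eq_insert (hT : G.IsTree) {r v p : V} (hp : G.Adj v p)
    (hpd : G.dist r v = G.dist r p + 1) :
    G.neighborSet v = insert p (children G r v) := by
  ext y
  simp only [SimpleGraph.mem_neighborSet, Set.mem_insert_iff, children, Set.mem_ofPred_eq]
  constructor
  · intro hy
    rcases hT.dist_eq_dist_add_one_of_adj r hy with h | h
    · exact Or.inl (parent_unique hT hy hp h hpd)
    · exact Or.inr ⟨hy, h⟩
  · rintro (rfl | h)
    exacts [hp, h.1]

lemma parent_notMem_children {r v p : V} (hpd : G.dist r v = G.dist r p + 1) :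
    p ∉ children G r v := by
  rintro ⟨-, h⟩
  omega

lemma neighborSet_root (r : V) : G.neighborSet r = children G r r := by
  ext y
  simp only [SimpleGraph.mem_neighborSet, children, Set.mem_ofPred_eq, SimpleGraph.dist_self,
    zero_add, SimpleGraph.dist_eq_one_iff_adj, and_self]

lemma finsum_children_of_ncard_one {r v c : V} (hc : c ∈ children G r v)
    (h : (children G r v).ncard = 1) (f : V → ℝ) : ∑ᶠ y ∈ children G r v, f y = f c := by
  obtain ⟨x, hx⟩ := Set.ncard_eq_one.1 h
  rw [hx] at hc ⊢
  rw [Set.mem_singleton_iff.1 hc, finsum_mem_singleton]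

section

variable [Fintype V] {d k : ℕ} {v₀ : V}

/-- A vertex of maximal distance from the root is a leaf, and so lies at distance `k`. -/
lemma dist_le (hT : G.IsTree)
    (hleaf : ∀ v : V, v ≠ v₀ → (G.neighborSet v).ncard = 1 → G.dist v₀ v = k) (v : V) :
    G.dist v₀ v ≤ k := by
  have : Nonempty V := ⟨v⟩
  obtain ⟨m, hm⟩ := Finite.exists_max (fun v => G.dist v₀ v)
  refine (hm v).trans ?_
  by_cases h : m = v₀
  · simp [h]
  obtain ⟨p, hp, hpd⟩ := exists_parent hT h
  refine (hleaf m h ?_).le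
  have : children G v₀ m = ∅ := by
    ext y
    simp only [children, Set.mem_ofPred_eq, Set.mem_empty_iff_false, iff_false, not_and]
    intro _ h
    have := hm y
    omega
  rw [neighborSet_eq_insert hT hp hpd, this]
  simp

lemma ncard_children (hT : G.IsTree)
    (hdeg₀ : (G.neighborSet v₀).ncard = d)
    (hdeg : ∀ v : V, v ≠ v₀ →
      (G.neighborSet v).ncard = d + 1 ∨ (G.neighborSet v).ncard = 1)
    (hleaf : ∀ v : V, v ≠ v₀ → (G.neighborSet v).ncard = 1 → G.dist v₀ v = k) (v : V) :
    (children G v₀ v).ncard = if G.dist v₀ v < k then d else 0 := by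
  split_ifs with h
  · by_cases hv : v = v₀
    · subst hv
      rw [← neighborSet_root, hdeg₀]
    obtain ⟨p, hp, hpd⟩ := exists_parent hT hv
    have h1 := hdeg v hv
    have h2 := hleaf v hv
    rw [neighborSet_eq_insert hT hp hpd,
      Set.ncard_insert_of_notMem (parent_notMem_children hpd) (Set.toFinite _)] at h1 h2
    rcases h1 with h1 | h1
    · omega
    · have := h2 h1
      omega
  · rw [Set.ncard_eq_zero (Set.toFinite _)]
    ext y
    simp only [children, Set.mem_ofPred_eq, Set.mem_empty_iff_false, iff_false, not_and]
    intro _ hy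
    have := dist_le hT hleaf y
    omega

lemma mul_finsum_mem {s : Set V} {f : V → ℝ} {A B : ℝ} (h : ∀ y ∈ s, B * f y = A) :
    B * ∑ᶠ y ∈ s, f y = s.ncard * A := by
  rw [finsum_mem_eq_finite_toFinset_sum f (Set.toFinite s), Finset.mul_sum,
    Finset.sum_congr rfl (fun y hy => h y (by simpa using hy)), Finset.sum_const,
    Set.ncard_eq_toFinset_card s (Set.toFinite s), nsmul_eq_mul]

lemma finsum_neighborSet (hT : G.IsTree) {r v p : V} (hp : G.Adj v p)
    (hpd : G.dist r v = G.dist r p + 1) (f : V → ℝ) :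
    ∑ᶠ y ∈ G.neighborSet v, f y = f p + ∑ᶠ y ∈ children G r v, f y := by
  rw [neighborSet_eq_insert hT hp hpd,
    finsum_mem_insert f (parent_notMem_children hpd) (Set.toFinite _)]

/-- The relation between the values at a vertex of height `h` and at its parent, proved by induction
from the leaves upwards. It is stated without division since `seq d` may vanish. -/
lemma seq_mul_parent (hT : G.IsTree)
    (hch : ∀ v, (children G v₀ v).ncard = if G.dist v₀ v < k then d else 0)
    {f : V → ℝ} (hf : ∀ x : V, f x = ∑ᶠ y ∈ G.neighborSet x, f y) (h : ℕ) :
    ∀ v p, G.Adj v p → G.dist v₀ v = G.dist v₀ p + 1 → G.dist v₀ v + h = k →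
      (seq d h : ℝ) * f p = seq d (h + 1) * f v := by
  induction h with
  | zero =>
    intro v p hp hpd hv
    have h1 := hf v
    rw [finsum_neighborSet hT hp hpd] at h1
    have h2 := hch v
    rw [if_neg (by omega), Set.ncard_eq_zero (Set.toFinite _)] at h2
    rw [h2, finsum_mem_empty, add_zero] at h1
    simp [seq, h1]
  | succ h ih =>
    intro v p hp hpd hv
    have h1 := hf v
    rw [finsum_neighborSet hT hp hpd] at h1
    have h2 := mul_finsum_mem (s := children G v₀ v) (f := f) (A := seq d h * f v)
      (B := seq d (h + 1))
      (fun y hy => (ih y v hy.1.symm hy.2 (by have := hy.2; omega)).symm)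
    rw [hch v, if_pos (by omega)] at h2
    simp only [seq]
    push_cast
    linear_combination (-(seq d (h + 1) : ℝ)) * h1 - h2

lemma seq_mul_root (hk : 1 ≤ k) (hT : G.IsTree)
    (hch : ∀ v, (children G v₀ v).ncard = if G.dist v₀ v < k then d else 0)
    {f : V → ℝ} (hf : ∀ x : V, f x = ∑ᶠ y ∈ G.neighborSet x, f y) :
    (seq d (k + 1) : ℝ) * f v₀ = 0 := by
  obtain ⟨h, rfl⟩ : ∃ h, k = h + 1 := ⟨k - 1, by omega⟩
  have h1 := hf v₀
  rw [neighborSet_root] at h1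
  have h2 := mul_finsum_mem (s := children G v₀ v₀) (f := f) (A := seq d h * f v₀)
    (B := seq d (h + 1))
    (fun y hy => (seq_mul_parent hT hch hf h y v₀ hy.1.symm hy.2
      (by have := hy.2; rw [SimpleGraph.dist_self] at this; omega)).symm)
  rw [hch v₀, if_pos (by simp)] at h2
  simp only [seq]
  push_cast
  linear_combination (seq d (h + 1) : ℝ) * h1 + h2

/-- For `d ≥ 2` a solution that vanishes at the root vanishes everywhere. -/
lemma eq_zero_of_two_le (hd : 2 ≤ d) (hT : G.IsTree) (hle : ∀ v, G.dist v₀ v ≤ k)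
    (hch : ∀ v, (children G v₀ v).ncard = if G.dist v₀ v < k then d else 0)
    {f : V → ℝ} (hf : ∀ x : V, f x = ∑ᶠ y ∈ G.neighborSet x, f y) (h0 : f v₀ = 0) (n : ℕ) :
    ∀ v, G.dist v₀ v = n → f v = 0 := by
  induction n with
  | zero =>
    intro v hv
    rw [← (hT.connected.dist_eq_zero_iff).1 hv, h0]
  | succ n ih =>
    intro v hv
    have hne : v ≠ v₀ := by rintro rfl; simp at hv
    obtain ⟨p, hp, hpd⟩ := exists_parent hT hne
    have h1 := seq_mul_parent hT hch hf (k - G.dist v₀ v) v p hp hpd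
      (by have := hle v; omega)
    rw [ih p (by omega), mul_zero] at h1
    rcases mul_eq_zero.1 h1.symm with h | h
    · exact absurd (Int.cast_eq_zero.1 h) (seq_ne_zero hd _)
    · exact h

/-- For `d = 1` the equations along the path determine a solution from its value at the root. -/
lemma eq_seq_dist_mul (hT : G.IsTree) (hle : ∀ v, G.dist v₀ v ≤ k)
    (hch : ∀ v, (children G v₀ v).ncard = if G.dist v₀ v < k then 1 else 0)
    {f : V → ℝ} (hf : ∀ x : V, f x = ∑ᶠ y ∈ G.neighborSet x, f y) (n : ℕ) :
    ∀ v, G.dist v₀ v = n → f v = seq 1 n * f v₀ := by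
  induction n using Nat.strong_induction_on with
  | _ n ih =>
    intro v hv
    by_cases hne : v = v₀
    · subst hne
      rw [SimpleGraph.dist_self] at hv
      simp [← hv, seq]
    obtain ⟨p, hp, hpd⟩ := exists_parent hT hne
    have hcard : (children G v₀ p).ncard = 1 := by
      rw [hch p, if_pos (by have := hle v; omega)]
    have hS := finsum_children_of_ncard_one (r := v₀) (v := p) (c := v) ⟨hp.symm, hpd⟩ hcard f
    by_cases hp0 : p = v₀
    · subst hp0
      have h1 := hf p
      rw [neighborSet_root, hS] at h1
      rw [SimpleGraph.dist_self] at hpd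
      simp [← hv, hpd, seq, h1]
    obtain ⟨g, hg, hgd⟩ := exists_parent hT hp0
    obtain ⟨m, rfl⟩ : ∃ m, n = m + 2 := ⟨n - 2, by omega⟩
    have h1 := hf p
    rw [finsum_neighborSet hT hg hgd, hS, ih (m + 1) (by omega) p (by omega),
      ih m (by omega) g (by omega)] at h1
    simp only [seq]
    push_cast
    linear_combination -h1

/-- For `d = 1` and `k % 3 = 1` the function `v ↦ seq 1 (dist v₀ v)` is a solution; the equation at
the leaf is `seq 1 (k + 1) = 0`. -/
lemma hasNSP_of_mod_three (hk : 1 ≤ k) (hT : G.IsTree) (hle : ∀ v, G.dist v₀ v ≤ k)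
    (hch : ∀ v, (children G v₀ v).ncard = if G.dist v₀ v < k then 1 else 0)
    (hmod : k % 3 = 1) : G.HasNSP := by
  refine ⟨fun v => (seq 1 (G.dist v₀ v) : ℝ), ?_, ?_⟩
  · intro h
    have := congrFun h v₀
    simp [seq] at this
  intro x
  have hS := mul_finsum_mem (s := children G v₀ x) (f := fun v => (seq 1 (G.dist v₀ v) : ℝ))
    (B := 1) (A := seq 1 (G.dist v₀ x + 1)) (fun y hy => by rw [one_mul, hy.2])
  rw [hch x, one_mul] at hS
  by_cases hx : x = v₀
  · subst hx
    rw [neighborSet_root, hS]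
    simp [seq, show 0 < k by omega]
  obtain ⟨p, hp, hpd⟩ := exists_parent hT hx
  rw [finsum_neighborSet hT hp hpd, hS, hpd]
  have hlex := hle x
  split_ifs with h
  · simp [hpd, seq]
  · have h0 : seq 1 (k + 1) = 0 := (seq_one_eq_zero_iff _).2 (by omega)
    rw [show k + 1 = G.dist v₀ p + 2 by omega, seq] at h0
    have h0' : seq 1 (G.dist v₀ p + 1) = seq 1 (G.dist v₀ p) := by
      push_cast at h0
      linarith
    simp [hpd, h0']

end

end LevelTree

open LevelTree in
/-- A level-symmetric tree `L_{d,k}` (a finite tree with a root `v₀` of degree `d`,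
all other vertices of degree `d+1` or `1`, and all leaves other than `v₀` at distance
exactly `k` from `v₀`) satisfies the neighbour sum property if and only if `d = 1` and
`k ≡ 1 (mod 3)`. -/
theorem levelSymmetricTree_hasNSP_iff {V : Type*} [Fintype V] (G : SimpleGraph V)
    (d k : ℕ) (hd : 1 ≤ d) (hk : 1 ≤ k) (hT : G.IsTree) (v₀ : V)
    (hdeg₀ : (G.neighborSet v₀).ncard = d)
    (hdeg : ∀ v : V, v ≠ v₀ →
      (G.neighborSet v).ncard = d + 1 ∨ (G.neighborSet v).ncard = 1)
    (hleaf : ∀ v : V, v ≠ v₀ → (G.neighborSet v).ncard = 1 → G.dist v₀ v = k) :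
    G.HasNSP ↔ d = 1 ∧ k % 3 = 1 := by
  have hle := dist_le hT hleaf
  have hch := ncard_children hT hdeg₀ hdeg hleaf
  constructor
  · rintro ⟨f, hf0, hf⟩
    have hroot := seq_mul_root hk hT hch hf
    by_cases hd1 : d = 1
    · subst hd1
      have hdown := eq_seq_dist_mul hT hle hch hf
      have hr : f v₀ ≠ 0 := by
        intro h
        apply hf0
        ext v
        simp [hdown _ v rfl, h]
      have h0 : seq 1 (k + 1) = 0 := by
        exact_mod_cast (mul_eq_zero.1 hroot).resolve_right hr
      have := (seq_one_eq_zero_iff _).1 h0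
      exact ⟨rfl, by omega⟩
    · have hd2 : 2 ≤ d := by omega
      have hr : f v₀ = 0 :=
        (mul_eq_zero.1 hroot).resolve_left (Int.cast_ne_zero.2 (seq_ne_zero hd2 _))
      exact absurd (funext fun v => eq_zero_of_two_le hd2 hT hle hch hf hr _ v rfl) hf0
  · rintro ⟨rfl, hmod⟩
    exact hasNSP_of_mod_three hk hT hle hch hmod
end

section
/- For every integer d ≥ 1, there exists a finite tree T = (V, E) such that the set of all functions f : V → ℝ satisfying f(x) = Σ_{y adjacent to x} f(y) for every vertex x is a real vector subspace of ℝ^V of dimension exactly d. -/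
/-!
The tree is a spider: a centre `c` with `d + 1` legs `c — aᵢ — bᵢ` of length two.
At the leaf `bᵢ` the equation says `f bᵢ = f aᵢ`; at `aᵢ` it says `f aᵢ = f c + f bᵢ`, so
`f c = 0`; at the centre it then says `∑ᵢ f aᵢ = 0`. Hence a solution is the same as a vector
`(f aᵢ)ᵢ ∈ ℝ^(d+1)` with vanishing coordinate sum, and these form a space of dimension `d`.

The spider is a tree because it is connected and has one edge per non-central vertex
(`spider_isTree`); its equations are solved in `spider_solution_iff`.
-/

/-- The vertices of the spider with `m` legs: `none` is the centre, `some (i, false)` the middle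
vertex `aᵢ` and `some (i, true)` the leaf `bᵢ` of the `i`-th leg. -/
abbrev SpiderVertex (m : ℕ) : Type := Option (Fin m × Bool)

/-- The neighbour of a non-central vertex that is closer to the centre. -/
def spiderParent {m : ℕ} : Fin m × Bool → SpiderVertex m
  | (_, false) => none
  | (i, true) => some (i, false)

/-- The edge joining a non-central vertex to its parent. -/
def spiderEdge {m : ℕ} (w : Fin m × Bool) : Sym2 (SpiderVertex m) := s(some w, spiderParent w)

/-- The spider with `m` legs of length two. -/
def spider (m : ℕ) : SimpleGraph (SpiderVertex m) :=
  SimpleGraph.fromEdgeSet (Set.range spiderEdge)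

lemma spiderEdge_injective {m : ℕ} : Function.Injective (spiderEdge (m := m)) := by
  rintro ⟨i, _ | _⟩ ⟨j, _ | _⟩ h <;> simp_all [spiderEdge, spiderParent]

lemma spider_adj_parent {m : ℕ} (w : Fin m × Bool) :
    (spider m).Adj (some w) (spiderParent w) := by
  rw [spider, SimpleGraph.fromEdgeSet_adj]
  refine ⟨⟨w, rfl⟩, ?_⟩
  rcases w with ⟨i, _ | _⟩ <;> simp [spiderParent]

lemma spider_edgeSet (m : ℕ) : (spider m).edgeSet = Set.range spiderEdge := by
  rw [spider, SimpleGraph.edgeSet_fromEdgeSet, sdiff_eq_left, Set.disjoint_left]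
  rintro _ ⟨w, rfl⟩ h
  exact (spider_adj_parent w).ne (by simpa [spiderEdge] using h)

lemma spider_isTree (m : ℕ) : (spider m).IsTree := by
  rw [SimpleGraph.isTree_iff_connected_and_card]
  constructor
  · rw [SimpleGraph.connected_iff_exists_forall_reachable]
    have ha (i : Fin m) : (spider m).Reachable none (some (i, false)) :=
      (spider_adj_parent (i, false)).symm.reachable
    refine ⟨none, ?_⟩
    rintro (_ | ⟨i, _ | _⟩)
    · exact SimpleGraph.Reachable.refl _
    · exact ha i
    · exact (ha i).trans (spider_adj_parent (i, true)).symm.reachable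
  · rw [spider_edgeSet, Nat.card_range_of_injective spiderEdge_injective]
    simp

lemma spider_neighborSet_center (m : ℕ) :
    (spider m).neighborSet none = Set.range fun i => some (i, false) := by
  ext (_ | ⟨i, _ | _⟩) <;> simp [spider, spiderEdge, spiderParent]

lemma spider_neighborSet_middle {m : ℕ} (i : Fin m) :
    (spider m).neighborSet (some (i, false)) = {none, some (i, true)} := by
  ext (_ | ⟨j, _ | _⟩) <;> simp [spider, spiderEdge, spiderParent, eq_comm]

lemma spider_neighborSet_leaf {m : ℕ} (i : Fin m) :
    (spider m).neighborSet (some (i, true)) = {some (i, false)} := by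
  ext (_ | ⟨j, _ | _⟩) <;> simp [spider, spiderEdge, spiderParent, eq_comm]

/-- The function on the spider that vanishes at the centre and equals `g i` on the `i`-th leg. -/
def spiderExtend {m : ℕ} (g : Fin m → ℝ) : SpiderVertex m → ℝ
  | none => 0
  | some (i, _) => g i

/-- With at least one leg, the solutions are the extensions of the vectors with vanishing sum. -/
lemma spider_solution_iff {m : ℕ} [NeZero m] (f : SpiderVertex m → ℝ) :
    (∀ v, f v = ∑ᶠ w ∈ (spider m).neighborSet v, f w) ↔
      ∃ g : Fin m → ℝ, ∑ i, g i = 0 ∧ spiderExtend g = f := by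
  have hcenter : ∑ᶠ w ∈ (spider m).neighborSet none, f w = ∑ i, f (some (i, false)) := by
    rw [spider_neighborSet_center, finsum_mem_range (by intro i j h; simpa using h),
      finsum_eq_sum_of_fintype]
  have hmiddle (i : Fin m) : ∑ᶠ w ∈ (spider m).neighborSet (some (i, false)), f w =
      f none + f (some (i, true)) := by
    rw [spider_neighborSet_middle, finsum_mem_pair (by simp)]
  have hleaf (i : Fin m) : ∑ᶠ w ∈ (spider m).neighborSet (some (i, true)), f w =
      f (some (i, false)) := by
    rw [spider_neighborSet_leaf, finsum_mem_singleton]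
  constructor
  · intro h
    have hb (i : Fin m) : f (some (i, true)) = f (some (i, false)) := (h _).trans (hleaf i)
    have hc : f none = 0 := by
      have := (h (some (0, false))).trans (hmiddle 0)
      linarith [hb 0]
    refine ⟨fun i => f (some (i, false)), ?_, ?_⟩
    · rw [← hcenter, ← h, hc]
    · funext v
      rcases v with _ | ⟨i, _ | _⟩
      · exact hc.symm
      · rfl
      · exact (hb i).symm
  · rintro ⟨g, hg, rfl⟩ (_ | ⟨i, _ | _⟩)
    · rw [hcenter]; exact hg.symm
    · rw [hmiddle]; simp [spiderExtend]
    · rw [hleaf]; rfl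

/-- `spiderExtend` as a linear map, with the vertices relabelled along `e`. -/
def spiderExtendLinear {m n : ℕ} (e : Fin n ≃ SpiderVertex m) :
    (Fin m → ℝ) →ₗ[ℝ] (Fin n → ℝ) where
  toFun g x := spiderExtend g (e x)
  map_add' g h := by
    funext x
    rcases hx : e x with _ | ⟨i, b⟩ <;> simp [hx, spiderExtend]
  map_smul' c g := by
    funext x
    rcases hx : e x with _ | ⟨i, b⟩ <;> simp [hx, spiderExtend]

lemma spiderExtendLinear_injective {m n : ℕ} (e : Fin n ≃ SpiderVertex m) :
    Function.Injective (spiderExtendLinear e) := by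
  intro g h hgh
  funext i
  simpa [spiderExtendLinear, spiderExtend] using congrFun hgh (e.symm (some (i, false)))

/-- The coordinate sum as a linear functional. -/
def coordSum (m : ℕ) : (Fin m → ℝ) →ₗ[ℝ] ℝ := ∑ i, LinearMap.proj i

lemma coordSum_apply {m : ℕ} (g : Fin m → ℝ) : coordSum m g = ∑ i, g i := by
  simp [coordSum]

lemma finrank_ker_coordSum (d : ℕ) : Module.finrank ℝ (coordSum (d + 1)).ker = d := by
  have hsurj : Function.Surjective (coordSum (d + 1)) := fun c =>
    ⟨Pi.single 0 c, by simp [coordSum_apply]⟩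
  have h := (coordSum (d + 1)).finrank_range_add_finrank_ker
  rw [LinearMap.range_eq_top.mpr hsurj, finrank_top, Module.finrank_self,
    Module.finrank_fin_fun] at h
  omega

/-- For every `d ≥ 1` there is a finite tree `T` for which the set of all functions
`f : V → ℝ` satisfying `f x = Σ_{y adjacent to x} f y` at every vertex `x` is a real
vector subspace of `ℝ^V` of dimension exactly `d`. -/
theorem exists_tree_solutionSpace_dim (d : ℕ) (hd : 1 ≤ d) :
    ∃ (n : ℕ) (G : SimpleGraph (Fin n)) (S : Submodule ℝ (Fin n → ℝ)),
      G.IsTree ∧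
      (S : Set (Fin n → ℝ)) =
        {f : Fin n → ℝ | ∀ x : Fin n, f x = ∑ᶠ y ∈ G.neighborSet x, f y} ∧
      Module.finrank ℝ S = d := by
  let e : Fin (Fintype.card (SpiderVertex (d + 1))) ≃ SpiderVertex (d + 1) :=
    (Fintype.equivFin _).symm
  refine ⟨_, (spider (d + 1)).comap e, (coordSum (d + 1)).ker.map (spiderExtendLinear e),
    ?_, ?_, ?_⟩
  · exact (SimpleGraph.Iso.comap e (spider (d + 1))).isTree_iff.mpr (spider_isTree _)
  · ext f
    -- The equations for `f` are those for `f ∘ e.symm` on the spider itself.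
    have htransport : (∀ x, f x = ∑ᶠ y ∈ ((spider (d + 1)).comap e).neighborSet x, f y) ↔
        ∀ v, (f ∘ e.symm) v = ∑ᶠ w ∈ (spider (d + 1)).neighborSet v, (f ∘ e.symm) w := by
      rw [← e.forall_congr_right]
      refine forall_congr' fun x => ?_
      rw [← finsum_comp_equiv e]
      simp
    rw [Set.mem_ofPred_eq, htransport, spider_solution_iff]
    simp only [SetLike.mem_coe, Submodule.mem_map, LinearMap.mem_ker, coordSum_apply]
    refine exists_congr fun g => and_congr_right fun _ => ?_
    exact (e.eq_comp_symm (spiderExtend g) f).symm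
  · exact (Submodule.equivMapOfInjective _ (spiderExtendLinear_injective e) _).finrank_eq.symm.trans
      (finrank_ker_coordSum d)
end

section
/- Let G = (V, E) be a finite tree containing five distinct vertices v_1, v_2, v_3, v_4, v_5 such that the neighbourhood of v_1 is exactly {v_2}, the neighbourhood of v_2 is exactly {v_1, v_3}, the neighbourhood of v_4 is exactly {v_3, v_5}, and the neighbourhood of v_5 is exactly {v_4}. Then G satisfies the neighbour sum property. -/
/-- Any finite tree containing five distinct vertices `v₁, …, v₅` whose neighbourhoods
are exactly `{v₂}`, `{v₁, v₃}`, (unconstrained for `v₃`), `{v₃, v₅}` and `{v₄}`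
respectively satisfies the neighbour sum property. -/
theorem tree_with_pendant_paths_hasNSP {V : Type*} [Fintype V] (G : SimpleGraph V)
    (hT : G.IsTree) (v₁ v₂ v₃ v₄ v₅ : V)
    (hdistinct : List.Pairwise (· ≠ ·) [v₁, v₂, v₃, v₄, v₅])
    (h₁ : G.neighborSet v₁ = {v₂})
    (h₂ : G.neighborSet v₂ = {v₁, v₃})
    (h₄ : G.neighborSet v₄ = {v₃, v₅})
    (h₅ : G.neighborSet v₅ = {v₄}) :
    G.HasNSP := by
  classical
  simp only [List.pairwise_cons, List.mem_cons, List.not_mem_nil, or_false] at hdistinct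
  obtain ⟨d₁, d₂, d₃, d₄, -⟩ := hdistinct
  have a₁ : ∀ x, G.Adj x v₁ ↔ x = v₂ := fun x => by
    rw [G.adj_comm, ← G.mem_neighborSet, h₁, Set.mem_singleton_iff]
  have a₂ : ∀ x, G.Adj x v₂ ↔ x = v₁ ∨ x = v₃ := fun x => by
    rw [G.adj_comm, ← G.mem_neighborSet, h₂, Set.mem_insert_iff, Set.mem_singleton_iff]
  have a₄ : ∀ x, G.Adj x v₄ ↔ x = v₃ ∨ x = v₅ := fun x => by
    rw [G.adj_comm, ← G.mem_neighborSet, h₄, Set.mem_insert_iff, Set.mem_singleton_iff]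
  have a₅ : ∀ x, G.Adj x v₅ ↔ x = v₄ := fun x => by
    rw [G.adj_comm, ← G.mem_neighborSet, h₅, Set.mem_singleton_iff]
  refine ⟨fun x => (if x = v₁ then 1 else 0) + (if x = v₂ then 1 else 0)
    - (if x = v₄ then 1 else 0) - (if x = v₅ then 1 else 0), fun h => ?_, fun x => ?_⟩
  · have h0 := congrFun h v₁
    simp [d₁ v₂, d₁ v₄, d₁ v₅] at h0
  · -- Writing `f` as a signed sum of indicators turns the neighbour sum at `x` into the
    -- same signed sum of the indicators of `x` being adjacent to each `vᵢ`.
    rw [finsum_mem_eq_finite_toFinset_sum _ (Set.toFinite _)]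
    simp only [Finset.sum_sub_distrib, Finset.sum_add_distrib, Finset.sum_ite_eq',
      Set.Finite.mem_toFinset, SimpleGraph.mem_neighborSet, a₁, a₂, a₄, a₅]
    have e₁ : v₁ ≠ v₃ := d₁ v₃ (by simp)
    have e₂ : v₃ ≠ v₅ := d₃ v₅ (by simp)
    split_ifs <;> grind
end

section
/- Let T = (V, E) be an infinite, locally finite tree and suppose there is a vertex v_0 ∈ V such that every vertex v ∈ V has at least one neighbour u with dist(v_0, u) = dist(v_0, v) + 1 and deg(u) ≥ 2 (i.e., every vertex has at least one child, relative to the root v_0, that is not a leaf). Then T satisfies the neighbour sum property. -/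
/-- In a tree rooted at `v₀`, every other vertex has exactly one neighbour closer to the root. -/
lemma existsUnique_parent {V : Type*} {G : SimpleGraph V} (hT : G.IsTree) (v₀ v : V)
    (hv : v ≠ v₀) : ∃! u, G.Adj v u ∧ G.dist v₀ v = G.dist v₀ u + 1 := by
  obtain ⟨p, hp, hlen⟩ := hT.connected.exists_path_of_dist v₀ v
  have hnil : ¬ p.Nil := SimpleGraph.Walk.not_nil_of_ne hv.symm
  refine ⟨p.penultimate, ⟨(p.adj_penultimate hnil).symm, ?_⟩, ?_⟩
  · have h1 := SimpleGraph.dist_le p.dropLast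
    have h2 := hT.dist_eq_dist_add_one_of_adj v₀ (p.adj_penultimate hnil)
    have h3 : p.dropLast.length ≤ p.length := by
      simp [SimpleGraph.Walk.dropLast, SimpleGraph.Walk.take_length]
    omega
  · rintro u ⟨hadj, hd⟩
    -- A geodesic to `u` extended by the edge to `v` is a geodesic, hence equals `p`.
    obtain ⟨q, hq, hqlen⟩ := hT.connected.exists_path_of_dist v₀ u
    have hpath : (q.concat hadj.symm).IsPath :=
      SimpleGraph.Walk.isPath_of_length_eq_dist _ (by simp [hqlen, hd])
    have heq : q.concat hadj.symm = p := (hT.existsUnique_path v₀ v).unique hpath hp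
    rw [← heq, SimpleGraph.Walk.penultimate_concat]

open Classical in
/-- Solution of the recursion outwards from the root, with `p` the parent map and `c v` the
chosen child of `v`. -/
lemma exists_outward_extension {V : Type*} (d : V → ℕ) (v₀ : V) (p c : V → V)
    (hp : ∀ v, v ≠ v₀ → d (p v) < d v) :
    ∃ f : V → ℝ, f v₀ = 1 ∧ ∀ v, v ≠ v₀ → f v =
      if v = c (p v) then (if p v = v₀ then f (p v) else f (p v) - f (p (p v))) else 0 := by
  let F : (v : V) → ((u : V) → d u < d v → ℝ) → ℝ := fun v g =>
    if h : v = v₀ then 1 else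
      if v = c (p v) then
        (if h' : p v = v₀ then g (p v) (hp v h)
          else g (p v) (hp v h) - g (p (p v)) ((hp _ h').trans (hp v h)))
      else 0
  have hfix := WellFounded.fix_eq (measure d).wf (C := fun _ => ℝ) F
  refine ⟨WellFounded.fix (measure d).wf (C := fun _ => ℝ) F, ?_, fun v hv => ?_⟩
  · rw [hfix]
    simp [F]
  · rw [hfix v]
    simp [F, hv]

/-- Let `T` be an infinite, locally finite tree with a root `v₀` such that every vertex
`v` has at least one neighbour `u` with `dist v₀ u = dist v₀ v + 1` and `deg u ≥ 2`
(i.e. a child, relative to `v₀`, that is not a leaf).  Then `T` satisfies the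
neighbour sum property. -/
theorem infinite_tree_hasNSP {V : Type*} [Infinite V] (G : SimpleGraph V)
    (hT : G.IsTree) (hlf : ∀ v : V, (G.neighborSet v).Finite) (v₀ : V)
    (hchild : ∀ v : V, ∃ u : V, G.Adj v u ∧ G.dist v₀ u = G.dist v₀ v + 1 ∧
      2 ≤ (G.neighborSet u).ncard) :
    G.HasNSP := by
  classical
  choose c hcadj hcdist _ using hchild
  have hpar : ∀ v, ∃ u, v ≠ v₀ → (G.Adj v u ∧ G.dist v₀ v = G.dist v₀ u + 1) ∧
      ∀ w, G.Adj v w ∧ G.dist v₀ v = G.dist v₀ w + 1 → w = u := by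
    intro v
    by_cases hv : v = v₀
    · exact ⟨v, fun h => absurd hv h⟩
    · obtain ⟨u, hu, huniq⟩ := existsUnique_parent hT v₀ v hv
      exact ⟨u, fun _ => ⟨hu, huniq⟩⟩
  choose p hp using hpar
  obtain ⟨f, hf0, hf⟩ := exists_outward_extension (G.dist v₀) v₀ p c
    (fun v hv => by have := (hp v hv).1.2; omega)
  have hne : ∀ v u, G.dist v₀ u = G.dist v₀ v + 1 → u ≠ v₀ := by
    rintro v u h rfl
    simp at h
  have hpu : ∀ v u, G.Adj v u → G.dist v₀ u = G.dist v₀ v + 1 → p u = v := fun v u ha hd =>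
    ((hp u (hne v u hd)).2 v ⟨ha.symm, hd⟩).symm
  have hc : ∀ v, f (c v) = if v = v₀ then f v else f v - f (p v) := by
    intro v
    rw [hf _ (hne v _ (hcdist v)), hpu v _ (hcadj v) (hcdist v), if_pos rfl]
  -- A child with a nonzero value is the chosen one.
  have hsupp : ∀ v u, G.Adj v u → G.dist v₀ u = G.dist v₀ v + 1 → f u ≠ 0 → u = c v := by
    intro v u ha hd hfu
    by_contra hcu
    apply hfu
    rw [hf _ (hne v u hd), hpu v u ha hd, if_neg hcu]
  refine ⟨f, fun h => by simp [h] at hf0, fun v => ?_⟩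
  by_cases hv : v = v₀
  · have key := finsum_mem_inter_support_eq' f (G.neighborSet v) {c v} (by
      intro u hu
      constructor
      · intro ha
        rcases hT.dist_eq_dist_add_one_of_adj v₀ ha with h | h
        · exact absurd hv (hne u v h)
        · exact hsupp v u ha h hu
      · rintro rfl
        exact hcadj v)
    rw [key, finsum_mem_singleton, hc, if_pos hv]
  · have key := finsum_mem_inter_support_eq' f (G.neighborSet v) {p v, c v} (by
      intro u hu
      constructor
      · intro ha
        rcases hT.dist_eq_dist_add_one_of_adj v₀ ha with h | h
        · exact Or.inl ((hp v hv).2 u ⟨ha, h⟩)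
        · exact Or.inr (hsupp v u ha h hu)
      · rintro (rfl | rfl)
        · exact (hp v hv).1.1
        · exact hcadj v)
    have hpc : p v ≠ c v := by
      intro h
      have h1 := (hp v hv).1.2
      have h2 := hcdist v
      rw [← h] at h2
      omega
    rw [key, finsum_mem_pair hpc, hc, if_neg hv]
    ring
end

section
/- Let G be the simple graph with vertex set ℤ × {0, 1, 2} whose edges are exactly {(n,0), (n+1,0)}, {(n,0), (n,1)}, and {(n,1), (n,2)} for every n ∈ ℤ. Then G is an infinite, locally finite tree, and every function f : ℤ × {0,1,2} → ℝ satisfying f(x) = Σ_{y adjacent to x} f(y) for all vertices x is identically zero; in particular, G does not satisfy the neighbour sum property. -/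
/-- The graph on `ℤ × {0, 1, 2}` whose edges are exactly `{(n,0), (n+1,0)}`,
`{(n,0), (n,1)}` and `{(n,1), (n,2)}` for every `n ∈ ℤ`: a doubly infinite path with a
pendant path of length two attached at every vertex. -/
def combGraph : SimpleGraph (ℤ × Fin 3) :=
  SimpleGraph.fromRel (fun p q =>
    (p.2 = 0 ∧ q.2 = 0 ∧ q.1 = p.1 + 1) ∨
    (p.2 = 0 ∧ q.2 = 1 ∧ q.1 = p.1) ∨
    (p.2 = 1 ∧ q.2 = 2 ∧ q.1 = p.1))

lemma combGraph_adj (p q : ℤ × Fin 3) : combGraph.Adj p q ↔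
    ((p.2 = 0 ∧ q.2 = 0 ∧ q.1 = p.1 + 1) ∨ (p.2 = 0 ∧ q.2 = 1 ∧ q.1 = p.1) ∨
      (p.2 = 1 ∧ q.2 = 2 ∧ q.1 = p.1)) ∨
    ((q.2 = 0 ∧ p.2 = 0 ∧ p.1 = q.1 + 1) ∨ (q.2 = 0 ∧ p.2 = 1 ∧ p.1 = q.1) ∨
      (q.2 = 1 ∧ p.2 = 2 ∧ p.1 = q.1)) := by
  unfold combGraph
  rw [SimpleGraph.fromRel_adj, and_iff_right_iff_imp]
  rintro h rfl
  revert h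
  grind

lemma combGraph_neighborSet_zero (n : ℤ) :
    combGraph.neighborSet (n, 0) = ↑({(n - 1, 0), (n + 1, 0), (n, 1)} : Finset (ℤ × Fin 3)) := by
  ext ⟨m, j⟩
  simp only [SimpleGraph.mem_neighborSet, combGraph_adj, Finset.coe_insert, Finset.coe_singleton,
    Set.mem_insert_iff, Set.mem_singleton_iff, Prod.mk.injEq]
  grind

lemma combGraph_neighborSet_one (n : ℤ) :
    combGraph.neighborSet (n, 1) = ↑({(n, 0), (n, 2)} : Finset (ℤ × Fin 3)) := by
  ext ⟨m, j⟩
  simp only [SimpleGraph.mem_neighborSet, combGraph_adj, Finset.coe_insert, Finset.coe_singleton,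
    Set.mem_insert_iff, Set.mem_singleton_iff, Prod.mk.injEq]
  grind

lemma combGraph_neighborSet_two (n : ℤ) :
    combGraph.neighborSet (n, 2) = ↑({(n, 1)} : Finset (ℤ × Fin 3)) := by
  ext ⟨m, j⟩
  simp only [SimpleGraph.mem_neighborSet, combGraph_adj, Finset.coe_singleton,
    Set.mem_singleton_iff, Prod.mk.injEq]
  grind

lemma combGraph_finite_neighborSet (v : ℤ × Fin 3) : (combGraph.neighborSet v).Finite := by
  obtain ⟨n, i⟩ := v
  fin_cases i
  · exact combGraph_neighborSet_zero n ▸ Finset.finite_toSet _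
  · exact combGraph_neighborSet_one n ▸ Finset.finite_toSet _
  · exact combGraph_neighborSet_two n ▸ Finset.finite_toSet _

lemma combGraph_eq_zero (f : ℤ × Fin 3 → ℝ)
    (hf : ∀ x : ℤ × Fin 3, f x = ∑ᶠ y ∈ combGraph.neighborSet x, f y) : f = 0 := by
  have h2 (n : ℤ) : f (n, 2) = f (n, 1) := by
    have h := hf (n, 2)
    rw [combGraph_neighborSet_two, finsum_mem_coe_finset] at h
    simpa using h
  have h1 (n : ℤ) : f (n, 1) = f (n, 0) + f (n, 2) := by
    have h := hf (n, 1)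
    rw [combGraph_neighborSet_one, finsum_mem_coe_finset, Finset.sum_pair (by simp)] at h
    exact h
  have h0 (n : ℤ) : f (n, 0) = f (n - 1, 0) + (f (n + 1, 0) + f (n, 1)) := by
    have h := hf (n, 0)
    rw [combGraph_neighborSet_zero, finsum_mem_coe_finset,
      Finset.sum_insert (by simp; omega), Finset.sum_pair (by simp)] at h
    exact h
  have z0 (n : ℤ) : f (n, 0) = 0 := by linarith [h1 n, h2 n]
  have z1 (n : ℤ) : f (n, 1) = 0 := by linarith [h0 n, z0 n, z0 (n - 1), z0 (n + 1)]
  funext ⟨n, i⟩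
  fin_cases i
  · exact z0 n
  · exact z1 n
  · exact (h2 n).trans (z1 n)

/-- An edge `uv` is a bridge as soon as some set of vertices (given by the predicate `P`) separates
`u` from `v` and is left by no edge other than `uv`. -/
lemma SimpleGraph.isBridge_of_cut {V : Type*} {G : SimpleGraph V} {u v : V}
    (P : V → Prop) (hu : P u) (hv : ¬ P v)
    (hP : ∀ a b, G.Adj a b → P a → ¬ P b → a = u ∧ b = v) : G.IsBridge s(u, v) := by
  rw [SimpleGraph.isBridge_iff]
  rintro ⟨w⟩
  obtain ⟨d, hd, h1, h2⟩ := w.exists_boundary_dart {x | P x} hu hv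
  have had := d.adj
  rw [SimpleGraph.deleteEdges_adj] at had
  obtain ⟨e1, e2⟩ := hP _ _ had.1 h1 h2
  exact had.2 (by simp [e1, e2])

lemma combGraph_isAcyclic : combGraph.IsAcyclic := by
  rw [SimpleGraph.isAcyclic_iff_forall_adj_isBridge]
  -- by symmetry only the three oriented kinds of edges have to be treated
  have key (p q : ℤ × Fin 3) (h : (p.2 = 0 ∧ q.2 = 0 ∧ q.1 = p.1 + 1) ∨
      (p.2 = 0 ∧ q.2 = 1 ∧ q.1 = p.1) ∨ (p.2 = 1 ∧ q.2 = 2 ∧ q.1 = p.1)) :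
      combGraph.IsBridge s(p, q) := by
    obtain ⟨n, i⟩ := p
    obtain ⟨m, j⟩ := q
    simp only at h
    obtain ⟨rfl, rfl, rfl⟩ | ⟨rfl, rfl, rfl⟩ | ⟨rfl, rfl, rfl⟩ := h
    · refine SimpleGraph.isBridge_of_cut (fun q => q.1 ≤ n) (by simp) (by simp) ?_
      rintro ⟨a, i⟩ ⟨b, j⟩ hab ha hb
      simp only [combGraph_adj, Prod.mk.injEq] at *
      grind
    · refine SimpleGraph.isBridge_of_cut (fun q => ¬ (q.1 = m ∧ q.2 ≠ 0)) (by simp) (by simp) ?_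
      rintro ⟨a, i⟩ ⟨b, j⟩ hab ha hb
      simp only [combGraph_adj, Prod.mk.injEq] at *
      grind
    · refine SimpleGraph.isBridge_of_cut (fun q => ¬ (q.1 = m ∧ q.2 = 2)) (by simp) (by simp) ?_
      rintro ⟨a, i⟩ ⟨b, j⟩ hab ha hb
      simp only [combGraph_adj, Prod.mk.injEq] at *
      grind
  intro p q h
  rcases (combGraph_adj p q).1 h with h | h
  · exact key p q h
  · rw [Sym2.eq_swap]
    exact key q p h

lemma combGraph_connected : combGraph.Connected := by
  have spine (n : ℤ) : combGraph.Reachable (0, 0) (n, 0) := by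
    induction n with
    | zero => exact SimpleGraph.Reachable.refl _
    | succ n ih => exact ih.trans (SimpleGraph.Adj.reachable (by simp [combGraph_adj]))
    | pred n ih => exact ih.trans (SimpleGraph.Adj.reachable (by simp [combGraph_adj]))
  have h1 (n : ℤ) : combGraph.Reachable (0, 0) (n, 1) :=
    (spine n).trans (SimpleGraph.Adj.reachable (by simp [combGraph_adj]))
  have h2 (n : ℤ) : combGraph.Reachable (0, 0) (n, 2) :=
    (h1 n).trans (SimpleGraph.Adj.reachable (by simp [combGraph_adj]))
  rw [SimpleGraph.connected_iff_exists_forall_reachable]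
  refine ⟨(0, 0), fun ⟨n, i⟩ => ?_⟩
  fin_cases i
  · exact spine n
  · exact h1 n
  · exact h2 n

/-- `combGraph` is an infinite, locally finite tree, every function satisfying the
neighbour-sum equations on it is identically zero, and in particular it does not
satisfy the neighbour sum property. -/
theorem combGraph_not_hasNSP :
    Infinite (ℤ × Fin 3) ∧
    combGraph.IsTree ∧
    (∀ v : ℤ × Fin 3, (combGraph.neighborSet v).Finite) ∧
    (∀ f : ℤ × Fin 3 → ℝ,
      (∀ x : ℤ × Fin 3, f x = ∑ᶠ y ∈ combGraph.neighborSet x, f y) → f = 0) ∧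
    ¬ combGraph.HasNSP := by
  refine ⟨inferInstance, ⟨combGraph_connected, combGraph_isAcyclic⟩, combGraph_finite_neighborSet,
    combGraph_eq_zero, ?_⟩
  rintro ⟨f, hne, hf⟩
  exact hne (combGraph_eq_zero f hf)
end

section
/- There exists an infinite, locally finite tree that does not satisfy the neighbour sum property. -/
namespace NSPComb

/-- The parent function of the comb on `ℕ`, with `xᵢ = 3i`, `aᵢ = 3i + 1`, `bᵢ = 3i + 2`. By
truncated subtraction the root `0` is its own parent. -/
def parent (n : ℕ) : ℕ := if n % 3 = 0 then n - 3 else n - 1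

/-- The comb: distinct vertices are adjacent when one is the parent of the other. -/
def comb : SimpleGraph ℕ := SimpleGraph.fromRel fun m n => parent m = n

lemma comb_adj {m n : ℕ} : comb.Adj m n ↔ m ≠ n ∧ (parent m = n ∨ parent n = m) := by
  simp [comb, SimpleGraph.fromRel_adj]

lemma parent_lt {n : ℕ} (hn : n ≠ 0) : parent n < n := by
  unfold parent; split_ifs <;> omega

lemma eq_parent_of_adj_of_le {m n : ℕ} (h : comb.Adj m n) (hle : n ≤ m) : n = parent m := by
  obtain ⟨hne, h | h⟩ := comb_adj.1 h
  · exact h.symm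
  · unfold parent at h ⊢; split_ifs at h ⊢ <;> omega

lemma comb_reachable_zero (n : ℕ) : comb.Reachable n 0 := by
  induction n using Nat.strong_induction_on with
  | _ n ih =>
    by_cases hn : n = 0
    · subst hn; rfl
    · have hlt := parent_lt hn
      exact (SimpleGraph.Adj.reachable (comb_adj.2 ⟨hlt.ne', Or.inl rfl⟩)).trans (ih _ hlt)

lemma comb_isAcyclic : comb.IsAcyclic := by
  intro v c hc
  obtain ⟨m, hm, hmax⟩ := c.support.toFinset.exists_max_image id ⟨v, by simp⟩
  simp only [List.mem_toFinset, id] at hm hmax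
  have hd := hc.rotate hm
  -- Based at its largest vertex `m`, the cycle leaves and re-enters `m` through `parent m`.
  have hle : ∀ u ∈ (c.rotate m hm).support, u ≤ m := fun u hu =>
    hmax u ((SimpleGraph.Walk.mem_support_rotate_iff c m hm).1 hu)
  have h1 := eq_parent_of_adj_of_le ((c.rotate m hm).adj_snd hd.not_nil)
    (hle _ ((c.rotate m hm).getVert_mem_support _))
  have h2 := eq_parent_of_adj_of_le ((c.rotate m hm).adj_penultimate hd.not_nil).symm
    (hle _ ((c.rotate m hm).getVert_mem_support _))
  exact hd.snd_ne_penultimate (h1.trans h2.symm)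

lemma comb_isTree : comb.IsTree where
  preconnected u v := (comb_reachable_zero u).trans (comb_reachable_zero v).symm
  nonempty := ⟨0⟩
  isAcyclic := comb_isAcyclic

lemma comb_neighborSet_finite (v : ℕ) : (comb.neighborSet v).Finite := by
  refine (Set.finite_Iic (v + 3)).subset fun w hw => ?_
  obtain ⟨-, h | h⟩ := comb_adj.1 hw <;>
  · unfold parent at h
    simp only [Set.mem_Iic]
    split_ifs at h <;> omega

lemma neighborSet_leaf (i : ℕ) : comb.neighborSet (3 * i + 2) = {3 * i + 1} := by
  ext w
  simp only [SimpleGraph.mem_neighborSet, comb_adj, parent, Set.mem_singleton_iff]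
  split_ifs <;> omega

lemma neighborSet_middle (i : ℕ) : comb.neighborSet (3 * i + 1) = {3 * i, 3 * i + 2} := by
  ext w
  simp only [SimpleGraph.mem_neighborSet, comb_adj, parent, Set.mem_insert_iff,
    Set.mem_singleton_iff]
  split_ifs <;> omega

lemma mod_three_of_adj_ray {i w : ℕ} (h : comb.Adj (3 * i) w) (hw : w ≠ 3 * i + 1) :
    w % 3 = 0 := by
  simp only [comb_adj, parent] at h
  split_ifs at h <;> omega

lemma comb_not_hasNSP : ¬ comb.HasNSP := by
  classical
  rintro ⟨f, hf0, hf⟩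
  have hleaf (i : ℕ) : f (3 * i + 2) = f (3 * i + 1) := by
    rw [hf, neighborSet_leaf, finsum_mem_singleton]
  have hray (i : ℕ) : f (3 * i) = 0 := by
    have h := hf (3 * i + 1)
    rw [neighborSet_middle, finsum_mem_pair (by omega), hleaf] at h
    linarith
  have hmid (i : ℕ) : f (3 * i + 1) = 0 := by
    have h := hf (3 * i)
    have hadj : 3 * i + 1 ∈ comb.neighborSet (3 * i) := by
      simp only [SimpleGraph.mem_neighborSet, comb_adj, parent]
      split_ifs <;> omega
    -- All neighbours of a ray vertex other than `3 * i + 1` lie on the ray, where `f` vanishes.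
    rw [hray, finsum_eq_single _ (3 * i + 1), finsum_eq_if, if_pos hadj] at h
    · exact h.symm
    · intro w hw
      rw [finsum_eq_if]
      split_ifs with hwadj
      · have := mod_three_of_adj_ray hwadj hw
        rw [show w = 3 * (w / 3) by omega, hray]
      · rfl
  refine hf0 (funext fun n => ?_)
  have hn : n = 3 * (n / 3) ∨ n = 3 * (n / 3) + 1 ∨ n = 3 * (n / 3) + 2 := by omega
  rcases hn with h | h | h <;> rw [h]
  · exact hray _
  · exact hmid _
  · exact (hleaf _).trans (hmid _)

end NSPComb

/-- There exists an infinite, locally finite tree that does not satisfy the neighbour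
sum property. -/
theorem exists_infinite_tree_not_hasNSP :
    ∃ (V : Type) (G : SimpleGraph V), Infinite V ∧ G.IsTree ∧
      (∀ v : V, (G.neighborSet v).Finite) ∧ ¬ G.HasNSP :=
  ⟨ℕ, NSPComb.comb, inferInstance, NSPComb.comb_isTree, NSPComb.comb_neighborSet_finite,
    NSPComb.comb_not_hasNSP⟩
end

section
/- For every integer n ≥ 3, the cycle graph on n vertices satisfies the neighbour sum property if and only if 6 divides n. Equivalently, there exists a function f : ℤ/nℤ → ℝ, not identically zero, with f(i) = f(i+1) + f(i-1) for all i ∈ ℤ/nℤ, if and only if 6 divides n. -/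
/-- The cycle graph on `n` vertices: vertex set `ZMod n`, with `i` adjacent to `j` if
and only if `j = i + 1` or `i = j + 1`. -/
def cycleGraph' (n : ℕ) : SimpleGraph (ZMod n) :=
  SimpleGraph.fromRel (fun i j => j = i + 1)

/-- For `n ≥ 3` the two neighbours `x + 1`, `x - 1` of `x` are distinct from each other and
from `x`, so the neighbour sum has exactly two terms. -/
lemma cycleGraph'_neighbour_sum (n : ℕ) (hn : 3 ≤ n) (f : ZMod n → ℝ) (x : ZMod n) :
    ∑ᶠ y ∈ (cycleGraph' n).neighborSet x, f y = f (x + 1) + f (x - 1) := by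
  have h1 : (1 : ZMod n) ≠ 0 := by
    intro h
    have h' : ((1 : ℕ) : ZMod n) = 0 := by exact_mod_cast h
    have := Nat.le_of_dvd (by norm_num) ((ZMod.natCast_eq_zero_iff 1 n).mp h')
    omega
  have h2 : (2 : ZMod n) ≠ 0 := by
    intro h
    have h' : ((2 : ℕ) : ZMod n) = 0 := by exact_mod_cast h
    have := Nat.le_of_dvd (by norm_num) ((ZMod.natCast_eq_zero_iff 2 n).mp h')
    omega
  have hset : (cycleGraph' n).neighborSet x = {x + 1, x - 1} := by
    ext y
    simp only [cycleGraph', SimpleGraph.mem_neighborSet, SimpleGraph.fromRel_adj,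
      Set.mem_insert_iff, Set.mem_singleton_iff]
    constructor
    · rintro ⟨-, h | h⟩
      · exact Or.inl h
      · exact Or.inr (by rw [h]; ring)
    · rintro (rfl | rfl)
      · exact ⟨fun h => h1 (by linear_combination -h), Or.inl rfl⟩
      · exact ⟨fun h => h1 (by linear_combination h), Or.inr (by ring)⟩
  rw [hset, finsum_mem_pair]
  exact fun h => h2 (by linear_combination h)

/-- The recurrence gives `f (i + 3) = -f i`, so `f` has period 6 as well as period `n`, hence
period `n % 6`; a nonzero remainder forces `f = 0`. -/
lemma six_dvd_of_recurrence (n : ℕ) (f : ZMod n → ℝ) (hf : f ≠ 0)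
    (h : ∀ i : ZMod n, f i = f (i + 1) + f (i - 1)) : 6 ∣ n := by
  have hs : ∀ i, f (i + 2) = f (i + 1) - f i := by
    intro i
    have := h (i + 1)
    rw [show i + 1 + 1 = i + 2 by ring, show i + 1 - 1 = i by ring] at this
    linarith
  have h3 : ∀ i, f (i + 3) = -f i := by
    intro i
    have a := hs i
    have b := hs (i + 1)
    rw [show i + 1 + 2 = i + 3 by ring, show i + 1 + 1 = i + 2 by ring] at b
    linarith
  have h6 : Function.Periodic f 6 := by
    intro i
    rw [show i + 6 = i + 3 + 3 by ring, h3, h3, neg_neg]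
  have hr : ∀ i, f (i + ((n % 6 : ℕ) : ZMod n)) = f i := by
    intro i
    have e : (6 : ZMod n) * ((n / 6 : ℕ) : ZMod n) + ((n % 6 : ℕ) : ZMod n) = 0 := by
      have := congrArg (Nat.cast : ℕ → ZMod n) (Nat.div_add_mod n 6)
      simpa only [Nat.cast_add, Nat.cast_mul, Nat.cast_ofNat, ZMod.natCast_self] using this
    rw [← (h6.nat_mul (n / 6)) (i + ((n % 6 : ℕ) : ZMod n))]
    congr 1
    linear_combination e
  by_contra hd
  apply hf
  funext i
  have hlt : n % 6 < 6 := Nat.mod_lt _ (by norm_num)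
  have hne : n % 6 ≠ 0 := fun h0 => hd (Nat.dvd_of_mod_eq_zero h0)
  -- With `a = f i` and `b = f (i + 1)`, the six values are `a, b, b - a, -a, -b, a - b`.
  have v2 := hs i
  have v3 := h3 i
  have v4 : f (i + 4) = -f (i + 1) := by
    rw [show i + 4 = i + 1 + 3 by ring, h3]
  have v5 : f (i + 5) = -f (i + 2) := by
    rw [show i + 5 = i + 2 + 3 by ring, h3]
  have v6 : f (i + 6) = f i := h6 i
  have r0 := hr i
  have r1 := hr (i + 1)
  generalize n % 6 = r at *
  simp only [Pi.zero_apply]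
  interval_cases r
  · exact absurd rfl hne
  all_goals
    push_cast at r0 r1
    ring_nf at *
    linarith

/-- The 6-periodic sequence `1, 1, 0, -1, -1, 0` descends to `ZMod n` when `6 ∣ n`. -/
lemma exists_recurrence_of_six_dvd (n : ℕ) (hd : 6 ∣ n) :
    ∃ f : ZMod n → ℝ, f ≠ 0 ∧ ∀ i : ZMod n, f i = f (i + 1) + f (i - 1) := by
  let g : ZMod 6 → ℤ := ![1, 1, 0, -1, -1, 0]
  have hg : ∀ j : ZMod 6, g j = g (j + 1) + g (j - 1) := by
    intro j
    fin_cases j <;> rfl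
  refine ⟨fun i => (g (ZMod.castHom hd (ZMod 6) i) : ℝ), ?_, ?_⟩
  · intro h
    have h0 := congrFun h 0
    simp [g] at h0
  · intro i
    simp only [map_add, map_sub, map_one]
    exact_mod_cast hg _

/-- For every `n ≥ 3`, the cycle graph on `n` vertices satisfies the neighbour sum
property if and only if `6 ∣ n`; equivalently, there is a not-identically-zero
`f : ℤ/nℤ → ℝ` with `f i = f (i+1) + f (i-1)` for all `i` if and only if `6 ∣ n`. -/
theorem cycleGraph_hasNSP_iff (n : ℕ) (hn : 3 ≤ n) :
    ((cycleGraph' n).HasNSP ↔ 6 ∣ n) ∧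
    ((∃ f : ZMod n → ℝ, f ≠ 0 ∧ ∀ i : ZMod n, f i = f (i + 1) + f (i - 1)) ↔
      6 ∣ n) := by
  have key : (∃ f : ZMod n → ℝ, f ≠ 0 ∧ ∀ i : ZMod n, f i = f (i + 1) + f (i - 1)) ↔
      6 ∣ n :=
    ⟨fun ⟨f, hf, h⟩ => six_dvd_of_recurrence n f hf h, exists_recurrence_of_six_dvd n⟩
  refine ⟨?_, key⟩
  rw [← key]
  simp only [SimpleGraph.HasNSP, cycleGraph'_neighbour_sum n hn]
end

section
/- For all integers m ≥ 1 and n ≥ 1, the complete bipartite graph K_{m,n} satisfies the neighbour sum property if and only if m = 1 and n = 1. -/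
lemma finsum_neighborSet_inl {m n : ℕ} (f : Fin m ⊕ Fin n → ℝ) (i : Fin m) :
    ∑ᶠ y ∈ (completeBipartiteGraph (Fin m) (Fin n)).neighborSet (Sum.inl i), f y
      = ∑ j, f (Sum.inr j) := by
  classical
  rw [finsum_mem_def, finsum_eq_sum_of_fintype, Fintype.sum_sum_type]
  simp

lemma finsum_neighborSet_inr {m n : ℕ} (f : Fin m ⊕ Fin n → ℝ) (j : Fin n) :
    ∑ᶠ y ∈ (completeBipartiteGraph (Fin m) (Fin n)).neighborSet (Sum.inr j), f y
      = ∑ i, f (Sum.inl i) := by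
  classical
  rw [finsum_mem_def, finsum_eq_sum_of_fintype, Fintype.sum_sum_type]
  simp

/-- For all `m, n ≥ 1`, the complete bipartite graph `K_{m,n}` satisfies the neighbour
sum property if and only if `m = 1` and `n = 1`. -/
theorem completeBipartite_hasNSP_iff (m n : ℕ) (hm : 1 ≤ m) (hn : 1 ≤ n) :
    (completeBipartiteGraph (Fin m) (Fin n)).HasNSP ↔ m = 1 ∧ n = 1 := by
  constructor
  · rintro ⟨f, hf, h⟩
    have hl i : f (Sum.inl i) = ∑ j, f (Sum.inr j) := by
      rw [h, finsum_neighborSet_inl]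
    have hr j : f (Sum.inr j) = ∑ i, f (Sum.inl i) := by
      rw [h, finsum_neighborSet_inr]
    have hA : ∑ i, f (Sum.inl i) = m * ∑ j, f (Sum.inr j) := by
      rw [Finset.sum_congr rfl fun i _ => hl i]
      simp
    have hB : ∑ j, f (Sum.inr j) = n * ∑ i, f (Sum.inl i) := by
      rw [Finset.sum_congr rfl fun j _ => hr j]
      simp
    generalize ∑ i, f (Sum.inl i) = A at *
    generalize ∑ j, f (Sum.inr j) = B at *
    have hA0 : A ≠ 0 := by
      rintro rfl
      apply hf
      funext x
      rcases x with i | j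
      · simp [hl, hB]
      · simp [hr]
    have hmn : (m : ℝ) * n = 1 := by
      apply mul_right_cancel₀ hA0
      rw [one_mul, mul_assoc, ← hB, ← hA]
    exact mul_eq_one.mp (by exact_mod_cast hmn)
  · rintro ⟨rfl, rfl⟩
    refine ⟨fun _ => 1, fun h => one_ne_zero (congrFun h (Sum.inl 0)), ?_⟩
    rintro (i | j)
    · rw [finsum_neighborSet_inl]; simp
    · rw [finsum_neighborSet_inr]; simp
end

section
/- Let d ≥ 2 be an integer and define the integer sequence a_0 = 1, a_1 = 1 − d, and a_{n+2} = a_{n+1} − d·a_n for all n ≥ 0. Then a_n ≠ 0 for every n ≥ 0. -/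
/-- Let `d ≥ 2` be an integer and let `a₀ = 1`, `a₁ = 1 - d`,
`a_{n+2} = a_{n+1} - d·a_n`.  Then `a_n ≠ 0` for all `n`. -/
theorem convergent_numerators_ne_zero (d : ℤ) (hd : 2 ≤ d) (a : ℕ → ℤ)
    (h0 : a 0 = 1) (h1 : a 1 = 1 - d)
    (hrec : ∀ n : ℕ, a (n + 2) = a (n + 1) - d * a n) :
    ∀ n : ℕ, a n ≠ 0 := by
  -- Modulo `d` the recurrence makes the sequence constant, equal to `1`, which is nonzero mod `d`.
  have key : ∀ n : ℕ, d ∣ a (n + 1) - 1 := by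
    intro n
    induction n with
    | zero => exact ⟨-1, by rw [zero_add, h1]; ring⟩
    | succ k ih =>
      obtain ⟨c, hc⟩ := ih
      exact ⟨c - a k, by rw [hrec k]; linear_combination hc⟩
  intro n hn
  cases n with
  | zero => omega
  | succ k =>
    have h := key k
    rw [hn, zero_sub, dvd_neg] at h
    have := Int.le_of_dvd one_pos h
    omega
end
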